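/- Let f be a C¹-diffeomorphism of S¹ with irrational rotation number α. Then for any ε > 0 there exists a C¹-diffeomorphism h of S¹ such that the distorsion of g = h∘f∘h⁻¹ on each maximal wandering interval of g is bounded by ε. -/

import Mathlib

open Set Filter

/-- `inArc a w b` : the point `w` (mod 1) lies strictly inside the positively oriented
open arc of the circle `ℝ/ℤ` from `a` (mod 1) to `b` (mod 1). -/
def inArc (a w b : ℝ) : Prop :=
  0 < Int.fract (w - a) ∧ Int.fract (w - a) < Int.fract (b - a)

/-- A lift of an orientation-preserving `C¹`-diffeomorphism of the circle `S¹ = ℝ/ℤ`: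
a `C¹` map `F : ℝ → ℝ` with `F (x+1) = F x + 1` and `F' > 0` everywhere. -/
structure CircleDiffeo where
  toFun : ℝ → ℝ
  contDiff : ContDiff ℝ 1 toFun
  deriv_pos : ∀ x : ℝ, 0 < deriv toFun x
  commute_translation : ∀ x : ℝ, toFun (x + 1) = toFun x + 1

/-- `f` has rotation number (a lift of) `α`. -/
def hasRotationNumber (f : CircleDiffeo) (α : ℝ) : Prop :=
  Tendsto (fun n : ℕ => f.toFun^[n] 0 / (n : ℝ)) atTop (nhds α)

/-- The `C¹`-distance between (lifts of) circle maps : sup distance between the maps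
plus sup distance between the derivatives (computed over a fundamental domain). -/
noncomputable def distC1 (f g : ℝ → ℝ) : ℝ :=
  (⨆ x : Icc (0:ℝ) 1, |f x.1 - g x.1|) + (⨆ x : Icc (0:ℝ) 1, |deriv f x.1 - deriv g x.1|)

instance : Fact ((0:ℝ) < 1) := ⟨zero_lt_one⟩

/-- The circle homeomorphism induced on `S¹ = ℝ/ℤ` by (the lift) `f`. -/
noncomputable def CircleDiffeo.proj (f : CircleDiffeo) :
    AddCircle (1:ℝ) → AddCircle (1:ℝ) :=
  fun z => ((f.toFun (((AddCircle.equivIco 1 0) z : ℝ))) : AddCircle (1:ℝ))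

/-- `M` is the (unique) minimal set of `T` : a nonempty closed invariant set with no
proper nonempty closed invariant subset. -/
def IsMinimalSet (T : AddCircle (1:ℝ) → AddCircle (1:ℝ)) (M : Set (AddCircle (1:ℝ))) : Prop :=
  M.Nonempty ∧ IsClosed M ∧ T '' M ⊆ M ∧
    ∀ M' : Set (AddCircle (1:ℝ)), M' ⊆ M → M'.Nonempty → IsClosed M' → T '' M' ⊆ M' → M' = M

/-- The (open) arc `(u,v)` of the circle is a maximal wandering interval of `T` :
its image in `S¹` is a connected component of the complement of the minimal set `M`. -/
def IsWanderingArc (M : Set (AddCircle (1:ℝ))) (u v : ℝ) : Prop :=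
  ∃ z ∈ Mᶜ, connectedComponentIn Mᶜ z = (fun t : ℝ => (t : AddCircle (1:ℝ))) '' Set.Ioo u v

/-!
Replacing `f` by `h ∘ f ∘ h⁻¹` changes `log f'` by the coboundary `log h' ∘ f - log h'`, read in the
coordinate before `h`. Choosing `log h'` to be, up to a constant, the mean of the first `N` Birkhoff
sums of `log f'` turns `log f'` into its `N`-th Birkhoff average. Since the rotation number is
irrational, the iterates of a wandering interval are pairwise disjoint, so their lengths add up to
at most `1`. By uniform continuity of `log f'`, its `N`-th Birkhoff average then oscillates on the
interval by at most `ε / 2 + K / N`, which is at most `ε` for large `N`.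
-/

lemma exists_dist_le_add_mul_dist {X Y : Type*} [PseudoMetricSpace X] [PseudoMetricSpace Y]
    {φ : X → Y} (hφ : UniformContinuous φ) (hb : Bornology.IsBounded (range φ))
    {ε : ℝ} (hε : 0 < ε) :
    ∃ K : ℝ, 0 ≤ K ∧ ∀ x y, dist (φ x) (φ y) ≤ ε + K * dist x y := by
  obtain ⟨C, hC⟩ := Metric.isBounded_range_iff.1 hb
  obtain ⟨δ, hδ, hclose⟩ := Metric.uniformContinuous_iff.1 hφ ε hε
  refine ⟨|C| / δ, by positivity, fun x y => ?_⟩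
  rcases lt_or_ge (dist x y) δ with hxy | hxy
  · have : 0 ≤ |C| / δ * dist x y := by positivity
    linarith [hclose hxy]
  · calc dist (φ x) (φ y) ≤ |C| := (hC x y).trans (le_abs_self C)
      _ = |C| / δ * δ := (div_mul_cancel₀ _ hδ.ne').symm
      _ ≤ |C| / δ * dist x y := by gcongr
      _ ≤ ε + |C| / δ * dist x y := by linarith

lemma exists_forall_dist_birkhoffAverage_le {X E : Type*} [PseudoMetricSpace X]
    [NormedAddCommGroup E] [NormedSpace ℝ E] (T : X → X) {φ : X → E} (hφ : UniformContinuous φ)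
    (hb : Bornology.IsBounded (range φ)) {ε : ℝ} (hε : 0 < ε) (L : ℝ) :
    ∃ N : ℕ, N ≠ 0 ∧ ∀ x y, ∑ i ∈ Finset.range N, dist (T^[i] x) (T^[i] y) ≤ L →
      dist (birkhoffAverage ℝ T φ N x) (birkhoffAverage ℝ T φ N y) ≤ ε := by
  obtain ⟨K, hK, hdist⟩ := exists_dist_le_add_mul_dist hφ hb (half_pos hε)
  obtain ⟨N, hsmall, hN⟩ :=
    (((tendsto_const_div_atTop_nhds_zero_nat (K * L)).eventually_le_const (half_pos hε)).and
      (eventually_ne_atTop 0)).exists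
  refine ⟨N, hN, fun x y hL => ?_⟩
  calc dist (birkhoffAverage ℝ T φ N x) (birkhoffAverage ℝ T φ N y)
      ≤ (∑ i ∈ Finset.range N, dist (φ (T^[i] x)) (φ (T^[i] y))) / N :=
        dist_birkhoffAverage_birkhoffAverage_le ℝ T φ N x y
    _ ≤ (∑ i ∈ Finset.range N, (ε / 2 + K * dist (T^[i] x) (T^[i] y))) / N := by
        gcongr with i; exact hdist _ _
    _ = ε / 2 + K * (∑ i ∈ Finset.range N, dist (T^[i] x) (T^[i] y)) / N := by
        rw [Finset.sum_add_distrib, ← Finset.mul_sum, Finset.sum_const, Finset.card_range,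
          nsmul_eq_mul]
        field_simp
    _ ≤ ε / 2 + K * L / N := by gcongr
    _ ≤ ε := by linarith

/-- The transfer function of the cohomological equation
`ψ ∘ T - ψ = birkhoffAverage R T φ N - φ`: the mean of the first `N` Birkhoff sums of `φ`. -/
def birkhoffTransfer (R : Type*) {X E : Type*} [DivisionSemiring R] [AddCommMonoid E] [Module R E]
    (T : X → X) (φ : X → E) (N : ℕ) (x : X) : E :=
  (N : R)⁻¹ • ∑ i ∈ Finset.range N, birkhoffSum T φ i x

lemma birkhoffAverage_eq_add_coboundary (R : Type*) {X E : Type*} [DivisionRing R] [CharZero R]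
    [AddCommGroup E] [Module R E] (T : X → X) (φ : X → E) {N : ℕ} (hN : N ≠ 0) (x : X) :
    birkhoffAverage R T φ N x =
      φ x + (birkhoffTransfer R T φ N (T x) - birkhoffTransfer R T φ N x) := by
  have htelescope : ∑ i ∈ Finset.range N, birkhoffSum T φ i (T x) -
      ∑ i ∈ Finset.range N, birkhoffSum T φ i x = birkhoffSum T φ N x - N • φ x := by
    rw [← Finset.sum_sub_distrib]
    simp only [birkhoffSum_apply_sub_birkhoffSum]
    rw [Finset.sum_sub_distrib, Finset.sum_const, Finset.card_range, birkhoffSum]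
  rw [birkhoffTransfer, birkhoffTransfer, ← smul_sub, htelescope, smul_sub, birkhoffAverage,
    ← Nat.cast_smul_eq_nsmul R, inv_smul_smul₀ (Nat.cast_ne_zero.2 hN), add_sub_cancel]

lemma continuous_birkhoffTransfer {R X E : Type*} [DivisionSemiring R] [TopologicalSpace X]
    [AddCommMonoid E] [Module R E] [TopologicalSpace E] [ContinuousAdd E] [ContinuousConstSMul R E]
    {T : X → X} {φ : X → E} (hT : Continuous T) (hφ : Continuous φ) (N : ℕ) :
    Continuous (birkhoffTransfer R T φ N) :=
  (continuous_const_smul (N : R)⁻¹).comp <| continuous_finsetSum _ fun _ _ =>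
    continuous_finsetSum _ fun k _ => hφ.comp (hT.iterate k)

lemma uniformContinuous_of_periodic {X : Type*} [UniformSpace X] {T : ℝ} [Fact (0 < T)]
    {φ : ℝ → X} (hφ : Continuous φ) (hp : Function.Periodic φ T) : UniformContinuous φ := by
  have hlift : UniformContinuous hp.lift :=
    CompactSpace.uniformContinuous_of_continuous (hφ.quotient_lift _)
  exact hlift.comp (uniformContinuous_addMonoidHom_of_continuous
    (f := QuotientAddGroup.mk' (AddSubgroup.zmultiples T)) (AddCircle.continuous_mk' T))

lemma sub_le_volume_real_image_Ioo {T : ℝ} [Fact (0 < T)] {p q : ℝ} (hpq : q ≤ p + T) :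
    q - p ≤ MeasureTheory.volume.real (((↑) : ℝ → AddCircle T) '' Ioo p q) := by
  set arc : Set (AddCircle T) := (↑) '' Ioo p q
  have harc : MeasurableSet arc := (QuotientAddGroup.isOpenMap_coe _ isOpen_Ioo).measurableSet
  have hsub : Ioo p q ⊆ ((↑) ⁻¹' arc) ∩ Ioc p (p + T) :=
    subset_inter (subset_preimage_image _ _) fun x hx => ⟨hx.1, hx.2.le.trans hpq⟩
  calc q - p ≤ MeasureTheory.volume.real (Ioo p q) := by
        rw [Real.volume_real_Ioo]; exact le_max_left _ _
    _ ≤ MeasureTheory.volume.real (((↑) ⁻¹' arc) ∩ Ioc p (p + T)) :=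
        MeasureTheory.measureReal_mono hsub
          (MeasureTheory.measure_ne_top_of_subset inter_subset_right measure_Ioc_lt_top.ne)
    _ = MeasureTheory.volume.real arc := by
        rw [MeasureTheory.measureReal_def, MeasureTheory.measureReal_def,
          AddCircle.add_projection_respects_measure T p harc]

lemma sum_sub_le_of_pairwiseDisjoint_image_Ioo {T : ℝ} [hT : Fact (0 < T)] {ι : Type*}
    {s : Finset ι} {p q : ι → ℝ} (hpq : ∀ i ∈ s, q i ≤ p i + T)
    (hdisj : (s : Set ι).PairwiseDisjoint fun i => ((↑) : ℝ → AddCircle T) '' Ioo (p i) (q i)) :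
    ∑ i ∈ s, (q i - p i) ≤ T :=
  calc ∑ i ∈ s, (q i - p i)
      ≤ ∑ i ∈ s, MeasureTheory.volume.real (((↑) : ℝ → AddCircle T) '' Ioo (p i) (q i)) :=
        Finset.sum_le_sum fun i hi => sub_le_volume_real_image_Ioo (hpq i hi)
    _ = MeasureTheory.volume.real (⋃ i ∈ s, ((↑) : ℝ → AddCircle T) '' Ioo (p i) (q i)) :=
        (MeasureTheory.measureReal_biUnion_finset hdisj fun _ _ =>
          (QuotientAddGroup.isOpenMap_coe _ isOpen_Ioo).measurableSet).symm
    _ ≤ MeasureTheory.volume.real (univ : Set (AddCircle T)) :=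
        MeasureTheory.measureReal_mono (subset_univ _)
    _ = T := by
        rw [MeasureTheory.measureReal_def, AddCircle.measure_univ, ENNReal.toReal_ofReal hT.out.le]

lemma coe_addCircle_one_eq_coe_iff {x y : ℝ} :
    (x : AddCircle (1 : ℝ)) = y ↔ ∃ m : ℤ, x = y + m := by
  rw [← sub_eq_zero, ← AddCircle.coe_sub, AddCircle.coe_eq_zero_iff]
  simp only [zsmul_one, ← sub_eq_iff_eq_add', eq_comm]

lemma coe_addCircle_one_add_intCast (x : ℝ) (m : ℤ) :
    ((x + m : ℝ) : AddCircle (1 : ℝ)) = x :=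
  coe_addCircle_one_eq_coe_iff.2 ⟨m, rfl⟩

/-- The interval `(a, b)` is an initial part of a gap of `s`. Lifts of wandering arcs are such
intervals; nothing is asked of `b`, because the left endpoint alone identifies the gap. -/
structure IsLeftGap {α : Type*} [Preorder α] (s : Set α) (a b : α) : Prop where
  left_mem : a ∈ s
  disjoint : Disjoint (Ioo a b) s

namespace IsLeftGap

variable {α β : Type*} [LinearOrder α] [LinearOrder β]

lemma left_eq {s : Set α} {a b c d x : α} (hab : IsLeftGap s a b) (hcd : IsLeftGap s c d)
    (hx : x ∈ Ioo a b) (hx' : x ∈ Ioo c d) : a = c :=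
  le_antisymm
    (not_lt.1 fun hca => disjoint_left.1 hcd.disjoint ⟨hca, hx.1.trans hx'.2⟩ hab.left_mem)
    (not_lt.1 fun hac => disjoint_left.1 hab.disjoint ⟨hac, hx'.1.trans hx.2⟩ hcd.left_mem)

lemma preimage_iff {f : α → β} (hf : StrictMono f) (hsurj : Function.Surjective f) {s : Set β}
    {a b : α} : IsLeftGap (f ⁻¹' s) a b ↔ IsLeftGap s (f a) (f b) := by
  have hdisj : Disjoint (Ioo a b) (f ⁻¹' s) ↔ Disjoint (Ioo (f a) (f b)) s := by
    simp only [disjoint_left, hsurj.forall, mem_Ioo, hf.lt_iff_lt, mem_preimage]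
  exact ⟨fun h => ⟨h.left_mem, hdisj.1 h.disjoint⟩, fun h => ⟨h.left_mem, hdisj.2 h.disjoint⟩⟩

lemma add_intCast {M : Set (AddCircle (1 : ℝ))} {a b : ℝ}
    (h : IsLeftGap ((↑) ⁻¹' M) a b) (m : ℤ) : IsLeftGap ((↑) ⁻¹' M) (a + m) (b + m) := by
  have htrans : (fun x : ℝ => x + m) ⁻¹' ((↑) ⁻¹' M) = ((↑) ⁻¹' M) := by
    ext x
    simp only [mem_preimage, coe_addCircle_one_add_intCast]
  exact (preimage_iff (f := fun x : ℝ => x + m) (fun _ _ hxy => add_lt_add_left hxy _)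
    (add_right_surjective _)).1 (htrans.symm ▸ h)

end IsLeftGap

lemma closure_connectedComponentIn_inter_subset {X : Type*} [TopologicalSpace X] {F : Set X}
    {z : X} (hz : z ∈ F) :
    closure (connectedComponentIn F z) ∩ F ⊆ connectedComponentIn F z := by
  have hsub : connectedComponentIn F z ⊆ closure (connectedComponentIn F z) ∩ F :=
    subset_inter subset_closure (connectedComponentIn_subset F z)
  exact (isPreconnected_connectedComponentIn.subset_closure hsub
    inter_subset_left).subset_connectedComponentIn (hsub (mem_connectedComponentIn hz))
      inter_subset_right

lemma IsWanderingArc.isLeftGap {M : Set (AddCircle (1 : ℝ))} {u v : ℝ} (huv : u < v)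
    (hvu : v ≤ u + 1) (h : IsWanderingArc M u v) : IsLeftGap ((↑) ⁻¹' M) u v := by
  obtain ⟨z, hz, hcomp⟩ := h
  have hclosure : (u : AddCircle (1 : ℝ)) ∈ closure (connectedComponentIn Mᶜ z) := by
    rw [hcomp]
    refine image_closure_subset_closure_image (AddCircle.continuous_mk' 1) (mem_image_of_mem _ ?_)
    exact closure_Ioo huv.ne ▸ left_mem_Icc.2 huv.le
  have hnotMem : (u : AddCircle (1 : ℝ)) ∉ connectedComponentIn Mᶜ z := by
    rw [hcomp]
    rintro ⟨t, ht, htu⟩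
    have ht' : t ∈ Ico u (u + 1) := ⟨ht.1.le, ht.2.trans_le hvu⟩
    exact ht.1.ne' ((AddCircle.coe_eq_coe_iff_of_mem_Ico ht' (by simp)).1 htu)
  refine ⟨by_contra fun hu => hnotMem ?_, ?_⟩
  · exact closure_connectedComponentIn_inter_subset hz ⟨hclosure, hu⟩
  · refine disjoint_left.2 fun x hx => connectedComponentIn_subset Mᶜ z ?_
    exact hcomp ▸ mem_image_of_mem _ hx

lemma IsMinimalSet.image_eq {T : AddCircle (1 : ℝ) → AddCircle (1 : ℝ)}
    {M : Set (AddCircle (1 : ℝ))} (hM : IsMinimalSet T M) (hT : Continuous T) : T '' M = M := by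
  obtain ⟨hne, hclosed, hmaps, hmin⟩ := hM
  exact hmin _ hmaps (hne.image T) (hclosed.isCompact.image hT).isClosed (image_mono hmaps)

namespace CircleDiffeo

section Lift

variable (f : CircleDiffeo)

protected lemma continuous : Continuous f.toFun :=
  f.contDiff.continuous

protected lemma strictMono : StrictMono f.toFun :=
  strictMono_of_deriv_pos f.deriv_pos

protected lemma hasDerivAt (x : ℝ) : HasDerivAt f.toFun (deriv f.toFun x) x :=
  (f.contDiff.differentiable one_ne_zero x).hasDerivAt

/-- `f` as a monotone degree one lift, which gives access to Mathlib's translation numbers. -/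
def toCircleDeg1Lift : CircleDeg1Lift where
  toFun := f.toFun
  monotone' := f.strictMono.monotone
  map_add_one' := f.commute_translation

protected lemma surjective : Function.Surjective f.toFun :=
  f.toCircleDeg1Lift.continuous_iff_surjective.1 f.continuous

lemma iterate_add_intCast (n : ℕ) (x : ℝ) (m : ℤ) :
    f.toFun^[n] (x + m) = f.toFun^[n] x + m :=
  ((f.toCircleDeg1Lift.commute_add_int m).iterate_left n) x

lemma map_add_intCast (x : ℝ) (m : ℤ) : f.toFun (x + m) = f.toFun x + m :=
  f.iterate_add_intCast 1 x m

lemma iterate_add_one (n : ℕ) (x : ℝ) : f.toFun^[n] (x + 1) = f.toFun^[n] x + 1 := by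
  simpa only [Int.cast_one] using f.iterate_add_intCast n x 1

lemma iterate_le_iterate_add_one {a b : ℝ} (hba : b ≤ a + 1) (n : ℕ) :
    f.toFun^[n] b ≤ f.toFun^[n] a + 1 :=
  (f.strictMono.monotone.iterate n hba).trans_eq (f.iterate_add_one n a)

lemma iterate_ne_add_intCast {α : ℝ} (hα : Irrational α) (hf : hasRotationNumber f α) {n : ℕ}
    (hn : 0 < n) (x : ℝ) (m : ℤ) : f.toFun^[n] x ≠ x + m := by
  intro hper
  have hrot : f.toCircleDeg1Lift.translationNumber = α :=
    f.toCircleDeg1Lift.translationNumber_eq_of_tendsto₀ hf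
  have hrat : f.toCircleDeg1Lift.translationNumber = m / n :=
    f.toCircleDeg1Lift.translationNumber_of_map_pow_eq_add_int
      (by rw [CircleDeg1Lift.coe_pow]; exact hper) hn
  exact hα ⟨m / n, by rw [← hrot, hrat]; push_cast; rfl⟩

end Lift

section Group

/-- The homeomorphism of the line underlying a lift. -/
noncomputable def toHomeomorph (f : CircleDiffeo) : ℝ ≃ₜ ℝ :=
  (f.strictMono.orderIsoOfSurjective f.toFun f.surjective).toHomeomorph

/-- The inverse diffeomorphism, lifted by the inverse of the lift. -/
noncomputable def inv (f : CircleDiffeo) : CircleDiffeo where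
  toFun := f.toHomeomorph.symm
  contDiff :=
    f.toHomeomorph.contDiff_symm_deriv (fun x => (f.deriv_pos x).ne') f.hasDerivAt f.contDiff
  deriv_pos x := by
    have hinv := (f.hasDerivAt (f.toHomeomorph.symm x)).of_local_left_inverse
      f.toHomeomorph.symm.continuous.continuousAt (f.deriv_pos _).ne'
      (Eventually.of_forall f.toHomeomorph.apply_symm_apply)
    rw [hinv.deriv]
    exact inv_pos.2 (f.deriv_pos _)
  commute_translation x := by
    rw [f.toHomeomorph.symm_apply_eq]
    have happly := f.commute_translation (f.toHomeomorph.symm x)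
    exact (happly.trans (congrArg (· + 1) (f.toHomeomorph.apply_symm_apply x))).symm

lemma inv_apply_apply (f : CircleDiffeo) (x : ℝ) : f.inv.toFun (f.toFun x) = x :=
  f.toHomeomorph.symm_apply_apply x

/-- Composition of diffeomorphisms, lifted by the composition of the lifts. -/
def comp (f g : CircleDiffeo) : CircleDiffeo where
  toFun := f.toFun ∘ g.toFun
  contDiff := f.contDiff.comp g.contDiff
  deriv_pos x := by
    rw [((f.hasDerivAt (g.toFun x)).comp x (g.hasDerivAt x)).deriv]
    exact mul_pos (f.deriv_pos _) (g.deriv_pos _)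
  commute_translation x := by
    simp only [Function.comp_apply, g.commute_translation, f.commute_translation]

lemma exists_semiconj (h f : CircleDiffeo) :
    ∃ g : CircleDiffeo, Function.Semiconj h.toFun f.toFun g.toFun :=
  ⟨h.comp (f.comp h.inv), fun x =>
    congrArg (fun y => h.toFun (f.toFun y)) (h.inv_apply_apply x).symm⟩

end Group

section Proj

lemma proj_coe (f : CircleDiffeo) (x : ℝ) : f.proj x = (f.toFun x : AddCircle (1 : ℝ)) := by
  obtain ⟨m, hm⟩ := coe_addCircle_one_eq_coe_iff.1
    (AddCircle.coe_equivIco (p := (1 : ℝ)) (a := 0) (y := (x : AddCircle (1 : ℝ))))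
  rw [proj, hm, f.map_add_intCast, coe_addCircle_one_add_intCast]

lemma continuous_proj (f : CircleDiffeo) : Continuous f.proj := by
  rw [QuotientAddGroup.isOpenQuotientMap_mk.isQuotientMap.continuous_iff]
  exact ((AddCircle.continuous_mk' 1).comp f.continuous).congr fun x => (f.proj_coe x).symm

lemma injective_proj (f : CircleDiffeo) : Function.Injective f.proj := by
  intro y z hyz
  induction y using QuotientAddGroup.induction_on with | H x =>
  induction z using QuotientAddGroup.induction_on with | H x' =>
  obtain ⟨m, hm⟩ := coe_addCircle_one_eq_coe_iff.1
    ((f.proj_coe x).symm.trans (hyz.trans (f.proj_coe x')))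
  rw [← f.map_add_intCast] at hm
  exact coe_addCircle_one_eq_coe_iff.2 ⟨m, f.strictMono.injective hm⟩

lemma preimage_proj_eq_of_isMinimalSet {f : CircleDiffeo} {M : Set (AddCircle (1 : ℝ))}
    (hM : IsMinimalSet f.proj M) : f.proj ⁻¹' M = M := by
  conv_lhs => rw [← hM.image_eq f.continuous_proj]
  exact preimage_image_eq M f.injective_proj

lemma semiconj_proj {h f g : CircleDiffeo} (hconj : Function.Semiconj h.toFun f.toFun g.toFun) :
    Function.Semiconj h.proj f.proj g.proj := by
  intro y
  induction y using QuotientAddGroup.induction_on with | H x =>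
  simp only [proj_coe, hconj.eq]

lemma preimage_proj_preimage_coe (f : CircleDiffeo) (M : Set (AddCircle (1 : ℝ))) :
    ((↑) ⁻¹' (f.proj ⁻¹' M) : Set ℝ) = f.toFun ⁻¹' ((↑) ⁻¹' M) := by
  ext x
  simp only [mem_preimage, proj_coe]

end Proj

section Gap

variable (f : CircleDiffeo) {M : Set (AddCircle (1 : ℝ))} {a b : ℝ}

lemma isLeftGap_preimage_proj_iff :
    IsLeftGap ((↑) ⁻¹' (f.proj ⁻¹' M)) a b ↔ IsLeftGap ((↑) ⁻¹' M) (f.toFun a) (f.toFun b) := by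
  rw [preimage_proj_preimage_coe, IsLeftGap.preimage_iff f.strictMono f.surjective]

lemma isLeftGap_iterate (hM : f.proj ⁻¹' M = M) (hab : IsLeftGap ((↑) ⁻¹' M) a b) (n : ℕ) :
    IsLeftGap ((↑) ⁻¹' M) (f.toFun^[n] a) (f.toFun^[n] b) := by
  induction n with
  | zero => exact hab
  | succ n ih =>
    rw [Function.iterate_succ_apply', Function.iterate_succ_apply',
      ← f.isLeftGap_preimage_proj_iff, hM]
    exact ih

-- If two iterates met, their left endpoints would agree mod 1 and `f` would have a periodic point.
lemma pairwise_disjoint_image_Ioo_iterate {α : ℝ} (hα : Irrational α)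
    (hf : hasRotationNumber f α) (hM : f.proj ⁻¹' M = M) (hab : IsLeftGap ((↑) ⁻¹' M) a b) :
    Pairwise (Function.onFun Disjoint fun n : ℕ =>
      ((↑) : ℝ → AddCircle (1 : ℝ)) '' Ioo (f.toFun^[n] a) (f.toFun^[n] b)) := by
  refine (pairwise_disjoint_on _).2 fun i j hij => disjoint_left.2 ?_
  rintro _ ⟨x, hx, rfl⟩ ⟨y, hy, hyx⟩
  obtain ⟨m, rfl⟩ := coe_addCircle_one_eq_coe_iff.1 hyx.symm
  have hleft : f.toFun^[i] a = f.toFun^[j] a + m :=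
    (f.isLeftGap_iterate hM hab i).left_eq ((f.isLeftGap_iterate hM hab j).add_intCast m) hx
      ⟨add_lt_add_left hy.1 _, add_lt_add_left hy.2 _⟩
  have hreturn : f.toFun^[j - i] (f.toFun^[i] a) = f.toFun^[j] a := by
    rw [← Function.iterate_add_apply, Nat.sub_add_cancel hij.le]
  refine f.iterate_ne_add_intCast hα hf (Nat.sub_pos_of_lt hij) (f.toFun^[i] a) (-m) ?_
  rw [hreturn, hleft, Int.cast_neg, add_neg_cancel_right]

lemma sum_dist_iterate_le_one {α : ℝ} (hα : Irrational α) (hf : hasRotationNumber f α)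
    (hM : f.proj ⁻¹' M = M) (hab : IsLeftGap ((↑) ⁻¹' M) a b) (hba : b ≤ a + 1) {x y : ℝ}
    (hx : x ∈ Icc a b) (hy : y ∈ Icc a b) (N : ℕ) :
    ∑ i ∈ Finset.range N, dist (f.toFun^[i] x) (f.toFun^[i] y) ≤ 1 := by
  have hmaps (i : ℕ) : MapsTo f.toFun^[i] (Icc a b) (Icc (f.toFun^[i] a) (f.toFun^[i] b)) :=
    (f.strictMono.monotone.iterate i).mapsTo_Icc
  calc ∑ i ∈ Finset.range N, dist (f.toFun^[i] x) (f.toFun^[i] y)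
      ≤ ∑ i ∈ Finset.range N, (f.toFun^[i] b - f.toFun^[i] a) :=
        Finset.sum_le_sum fun i _ => Real.dist_le_of_mem_Icc (hmaps i hx) (hmaps i hy)
    _ ≤ 1 := sum_sub_le_of_pairwiseDisjoint_image_Ioo
        (fun i _ => f.iterate_le_iterate_add_one hba i)
        ((f.pairwise_disjoint_image_Ioo_iterate hα hf hM hab).set_pairwise _)

end Gap

section DerivLog

/-- The logarithm of the derivative, the additive cocycle whose oscillation on an interval is the
distorsion there. -/
noncomputable def derivLog (f : CircleDiffeo) (x : ℝ) : ℝ :=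
  Real.log (deriv f.toFun x)

lemma continuous_derivLog (f : CircleDiffeo) : Continuous f.derivLog :=
  (f.contDiff.continuous_deriv le_rfl).log fun x => (f.deriv_pos x).ne'

lemma periodic_derivLog (f : CircleDiffeo) : Function.Periodic f.derivLog 1 := by
  intro x
  rw [derivLog, derivLog, ← deriv_comp_add_const, funext f.commute_translation, deriv_add_const]

lemma log_deriv_div_deriv (f : CircleDiffeo) (x y : ℝ) :
    Real.log (deriv f.toFun x / deriv f.toFun y) = f.derivLog x - f.derivLog y :=
  Real.log_div (f.deriv_pos x).ne' (f.deriv_pos y).ne'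

lemma derivLog_add_derivLog_of_semiconj {h f g : CircleDiffeo}
    (hconj : Function.Semiconj h.toFun f.toFun g.toFun) (x : ℝ) :
    g.derivLog (h.toFun x) + h.derivLog x = h.derivLog (f.toFun x) + f.derivLog x := by
  have hgh := (g.hasDerivAt (h.toFun x)).comp x (h.hasDerivAt x)
  have hhf := (h.hasDerivAt (f.toFun x)).comp x (f.hasDerivAt x)
  rw [← hconj.comp_eq] at hgh
  simp only [derivLog]
  rw [← Real.log_mul (g.deriv_pos _).ne' (h.deriv_pos _).ne',
    ← Real.log_mul (h.deriv_pos _).ne' (f.deriv_pos _).ne', hgh.unique hhf]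

lemma exists_deriv_eq {D : ℝ → ℝ} (hD : Continuous D) (hpos : ∀ x, 0 < D x)
    (hp : Function.Periodic D 1) (hint : ∫ t in (0 : ℝ)..1, D t = 1) :
    ∃ h : CircleDiffeo, deriv h.toFun = D := by
  have hderiv : deriv (fun x => ∫ t in (0 : ℝ)..x, D t) = D :=
    funext fun x => hD.deriv_integral D 0 x
  refine ⟨⟨fun x => ∫ t in (0 : ℝ)..x, D t, ?_, fun x => ?_, fun x => ?_⟩, hderiv⟩
  · refine contDiff_one_iff_deriv.2 ⟨fun x => ?_, by rwa [hderiv]⟩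
    exact (hD.integral_hasStrictDerivAt 0 x).hasDerivAt.differentiableAt
  · rw [hderiv]
    exact hpos x
  · rw [← intervalIntegral.integral_add_adjacent_intervals (hD.intervalIntegrable 0 x)
      (hD.intervalIntegrable x (x + 1)), hp.intervalIntegral_add_eq x 0, zero_add, hint]

lemma exists_derivLog_eq_sub_const {ψ : ℝ → ℝ} (hψ : Continuous ψ) (hp : Function.Periodic ψ 1) :
    ∃ (h : CircleDiffeo) (c : ℝ), ∀ x, h.derivLog x = ψ x - c := by
  have hexp : Continuous fun x => Real.exp (ψ x) := Real.continuous_exp.comp hψ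
  set A := ∫ t in (0 : ℝ)..1, Real.exp (ψ t)
  have hA : 0 < A := intervalIntegral.intervalIntegral_pos_of_pos (hexp.intervalIntegrable 0 1)
    (fun x => Real.exp_pos _) one_pos
  obtain ⟨h, hh⟩ := exists_deriv_eq (D := fun x => Real.exp (ψ x) / A) (hexp.div_const A)
    (fun x => by positivity) (fun x => by simp only [hp x])
    (by rw [intervalIntegral.integral_div, div_self hA.ne'])
  refine ⟨h, Real.log A, fun x => ?_⟩
  rw [derivLog, hh, Real.log_div (Real.exp_pos _).ne' hA.ne', Real.log_exp]

lemma exists_semiconj_derivLog_eq_add_coboundary (f : CircleDiffeo) {ψ : ℝ → ℝ}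
    (hψ : Continuous ψ) (hp : Function.Periodic ψ 1) :
    ∃ h g : CircleDiffeo, Function.Semiconj h.toFun f.toFun g.toFun ∧
      ∀ x, g.derivLog (h.toFun x) = f.derivLog x + (ψ (f.toFun x) - ψ x) := by
  obtain ⟨h, c, hh⟩ := exists_derivLog_eq_sub_const hψ hp
  obtain ⟨g, hconj⟩ := h.exists_semiconj f
  refine ⟨h, g, hconj, fun x => ?_⟩
  linarith [derivLog_add_derivLog_of_semiconj hconj x, hh x, hh (f.toFun x)]

lemma exists_semiconj_derivLog_eq_birkhoffAverage (f : CircleDiffeo) {N : ℕ} (hN : N ≠ 0) :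
    ∃ h g : CircleDiffeo, Function.Semiconj h.toFun f.toFun g.toFun ∧
      ∀ x, g.derivLog (h.toFun x) = birkhoffAverage ℝ f.toFun f.derivLog N x := by
  have hcont : Continuous (birkhoffTransfer ℝ f.toFun f.derivLog N) :=
    continuous_birkhoffTransfer f.continuous f.continuous_derivLog N
  have hper : Function.Periodic (birkhoffTransfer ℝ f.toFun f.derivLog N) 1 := fun x => by
    simp only [birkhoffTransfer, birkhoffSum, f.iterate_add_one, f.periodic_derivLog _]
  obtain ⟨h, g, hconj, hlog⟩ := f.exists_semiconj_derivLog_eq_add_coboundary hcont hper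
  exact ⟨h, g, hconj, fun x =>
    (hlog x).trans (birkhoffAverage_eq_add_coboundary ℝ f.toFun f.derivLog hN x).symm⟩

end DerivLog

end CircleDiffeo

/-- **Proposition.** Let `f` be a `C¹`-diffeomorphism of `S¹` with irrational rotation
number `α`. For any `ε > 0` there is a `C¹`-diffeomorphism `h` such that the distorsion
of `g = h∘f∘h⁻¹` on each maximal wandering interval `[u,v]` of `g` (the closure of a
connected component of the complement of the minimal set of `g`) is bounded by `ε`. -/
theorem small_distorsion_on_wandering (α : ℝ) (hα : Irrational α)
    (f : CircleDiffeo) (hf : hasRotationNumber f α) (ε : ℝ) (hε : 0 < ε) :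
    ∃ h g : CircleDiffeo, (∀ x : ℝ, g.toFun (h.toFun x) = h.toFun (f.toFun x)) ∧
      ∀ M : Set (AddCircle (1:ℝ)), IsMinimalSet g.proj M →
        ∀ u v : ℝ, u < v → v < u + 1 → IsWanderingArc M u v →
          ∀ w₁ ∈ Set.Icc u v, ∀ w₂ ∈ Set.Icc u v,
            Real.log (deriv g.toFun w₁ / deriv g.toFun w₂) ≤ ε := by
  obtain ⟨N, hN, haverage⟩ := exists_forall_dist_birkhoffAverage_le f.toFun
    (uniformContinuous_of_periodic f.continuous_derivLog f.periodic_derivLog)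
    (f.periodic_derivLog.isBounded_of_continuous one_ne_zero f.continuous_derivLog) hε 1
  obtain ⟨h, g, hconj, hlog⟩ := f.exists_semiconj_derivLog_eq_birkhoffAverage hN
  refine ⟨h, g, fun x => (hconj x).symm, fun M hM u v huv hvu harc w₁ hw₁ w₂ hw₂ => ?_⟩
  obtain ⟨a, rfl⟩ := h.surjective u
  obtain ⟨b, rfl⟩ := h.surjective v
  obtain ⟨x, rfl⟩ := h.surjective w₁
  obtain ⟨y, rfl⟩ := h.surjective w₂
  have hgap : IsLeftGap ((↑) ⁻¹' (h.proj ⁻¹' M)) a b :=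
    h.isLeftGap_preimage_proj_iff.2 (harc.isLeftGap huv hvu.le)
  have hinv : f.proj ⁻¹' (h.proj ⁻¹' M) = h.proj ⁻¹' M := by
    rw [← preimage_comp, (CircleDiffeo.semiconj_proj hconj).comp_eq, preimage_comp,
      CircleDiffeo.preimage_proj_eq_of_isMinimalSet hM]
  have hba : b ≤ a + 1 :=
    h.strictMono.le_iff_le.1 (hvu.le.trans_eq (h.commute_translation a).symm)
  have hmem {t : ℝ} (ht : h.toFun t ∈ Icc (h.toFun a) (h.toFun b)) : t ∈ Icc a b :=
    ⟨h.strictMono.le_iff_le.1 ht.1, h.strictMono.le_iff_le.1 ht.2⟩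
  rw [g.log_deriv_div_deriv, hlog, hlog]
  exact (le_abs_self _).trans <| haverage x y <|
    f.sum_dist_iterate_le_one hα hf hinv hgap hba (hmem hw₁) (hmem hw₂) N
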